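/- For every integer N ≥ 3 and every s with 0 < s < 1, there exist constants C₄ > 0 and C₄' > 0, depending only on N and s, such that C₄ · e^{-(N-1)r} r^{s-1} ≤ F_{N,s}(r) ≤ C₄' · e^{-(N-1)r} r^{s-1} for all r ≥ 1. -/

import Mathlib

/-!
Substituting `t = r u` and completing the square turns the exponent of `hN` into
`-(N - 1) r - r φ(u)` with `φ(u) = ((N - 1) u - 1)² / (4 u)`, while `1 + r + r u` is comparable to
`r (1 + u)` for `r ≥ 1`. Hence `F N s r` is comparable to `e^{-(N-1) r} r^{s-1/2}` times the
Laplace-type integral of `u ^ p (1 + u) ^ q e^{-r φ(u)}` over `u > 0`. Since `φ` has a quadratic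
zero at `u = 1 / (N - 1)` and grows like `1 / u` at `0` and like `u` at infinity, that integral is
of order `r^{-1/2}`: it is dominated by a Cauchy density of width `r^{-1/2}`, and its integrand is
bounded below on an interval of that length next to the zero of `φ`.
-/

open Real MeasureTheory Set Filter

/-- The explicit function comparable to the heat kernel of hyperbolic space `ℍ^N`
at geodesic distance `r`. -/
noncomputable def hN (N : ℕ) (t r : ℝ) : ℝ :=
  (4 * π * t) ^ (-(N : ℝ) / 2) *
    Real.exp (-(((N : ℝ) - 1) ^ 2 * t) / 4 - ((N : ℝ) - 1) * r / 2 - r ^ 2 / (4 * t)) *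
    (1 + r + t) ^ (((N : ℝ) - 3) / 2) * (1 + r)

/-- `F N s r = ∫₀^∞ h_N(t,r) t^{s-1} dt`, comparable to the Green function of
`(-Δ_{ℍ^N})^s` at geodesic distance `r`. -/
noncomputable def F (N : ℕ) (s r : ℝ) : ℝ :=
  ∫ t in Ioi (0 : ℝ), hN N t r * t ^ (s - 1)

lemma integrable_inv_one_add_mul_sub_sq {b : ℝ} (hb : b ≠ 0) (d : ℝ) :
    Integrable fun x : ℝ => (1 + (b * x - d) ^ 2)⁻¹ :=
  (integrable_inv_one_add_sq.comp_sub_right d).comp_mul_left' hb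

lemma integral_inv_one_add_mul_sub_sq (b d : ℝ) :
    ∫ x : ℝ, (1 + (b * x - d) ^ 2)⁻¹ = |b⁻¹| * π := by
  rw [Measure.integral_comp_mul_left (fun x : ℝ => (1 + (x - d) ^ 2)⁻¹) b,
    integral_sub_right_eq_self (fun x : ℝ => (1 + x ^ 2)⁻¹) d, integral_univ_inv_one_add_sq,
    smul_eq_mul]

lemma integral_mem_Icc_of_comparable {α : Type*} [MeasurableSpace α] {μ : Measure α} {f g : α → ℝ}
    {c C : ℝ} (hf : AEStronglyMeasurable f μ) (hg : Integrable g μ)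
    (hfg : ∀ᵐ x ∂μ, f x ∈ Icc (c * g x) (C * g x)) :
    ∫ x, f x ∂μ ∈ Icc (c * ∫ x, g x ∂μ) (C * ∫ x, g x ∂μ) := by
  have hlow : ∀ᵐ x ∂μ, c * g x ≤ f x := hfg.mono fun _ hx => hx.1
  have hup : ∀ᵐ x ∂μ, f x ≤ C * g x := hfg.mono fun _ hx => hx.2
  have hfi : Integrable f μ :=
    integrable_of_le_of_le hf hlow hup (hg.const_mul c) (hg.const_mul C)
  simp only [← integral_const_mul]
  exact ⟨integral_mono_ae (hg.const_mul c) hfi hlow, integral_mono_ae hfi (hg.const_mul C) hup⟩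

lemma rpow_mem_Icc_of_mem_Icc {x y K : ℝ} (q : ℝ) (hx : 0 < x) (hy : y ∈ Icc x (K * x)) :
    y ^ q ∈ Icc (K ^ (-|q|) * x ^ q) (K ^ |q| * x ^ q) := by
  obtain ⟨z, rfl⟩ : ∃ z, y = z * x := ⟨y / x, (div_mul_cancel₀ y hx.ne').symm⟩
  have hz1 : 1 ≤ z := by simpa [hx] using hy.1
  have hzK : z ≤ K := le_of_mul_le_mul_right hy.2 hx
  rw [mul_rpow (by linarith) hx.le]
  constructor <;> gcongr
  · calc K ^ (-|q|) ≤ z ^ (-|q|) := rpow_le_rpow_of_nonpos (by linarith) hzK (by simp)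
      _ ≤ z ^ q := rpow_le_rpow_of_exponent_le hz1 (neg_abs_le q)
  · calc z ^ q ≤ z ^ |q| := rpow_le_rpow_of_exponent_le hz1 (le_abs_self q)
      _ ≤ K ^ |q| := by gcongr

lemma exists_one_add_rpow_mul_exp_neg_le (p : ℝ) {c : ℝ} (hc : 0 < c) :
    ∃ C > 0, ∀ x : ℝ, 0 ≤ x → (1 + x) ^ p * exp (-(c * x)) ≤ C := by
  obtain ⟨n, hn⟩ := exists_nat_ge p
  refine ⟨n.factorial / c ^ n * exp c, by positivity, fun x hx => ?_⟩
  have hpow : (1 + x) ^ p ≤ (1 + x) ^ n := by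
    rw [← rpow_natCast]
    exact rpow_le_rpow_of_exponent_le (by linarith) hn
  have hexp : (1 + x) ^ n ≤ n.factorial / c ^ n * exp (c * (1 + x)) := by
    have := pow_div_factorial_le_exp (x := c * (1 + x)) (by positivity) n
    rw [div_le_iff₀ (by positivity), mul_pow] at this
    rw [div_mul_eq_mul_div, le_div_iff₀ (by positivity)]
    linarith
  calc (1 + x) ^ p * exp (-(c * x))
      ≤ n.factorial / c ^ n * exp (c * (1 + x)) * exp (-(c * x)) := by
        gcongr
        exact hpow.trans hexp
    _ = n.factorial / c ^ n * exp c := by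
        rw [mul_assoc, ← exp_add]
        ring_nf

lemma rpow_mul_one_add_rpow (p q : ℝ) {u : ℝ} (hu : 0 < u) :
    u ^ p * (1 + u) ^ q = (1 + u⁻¹) ^ (-p) * (1 + u) ^ (p + q) := by
  have hinv : 1 + u⁻¹ = (1 + u) / u := by field_simp; ring
  rw [hinv, div_rpow (by positivity) hu.le, rpow_add (by positivity), rpow_neg (by positivity),
    rpow_neg hu.le]
  field_simp

lemma exists_rpow_mul_one_add_rpow_mul_exp_le (p q : ℝ) {α β : ℝ} (hα : 0 < α) (hβ : 0 < β) :
    ∃ C > 0, ∀ u : ℝ, 0 < u → u ^ p * (1 + u) ^ q * exp (-(α * u⁻¹ + β * u)) ≤ C := by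
  obtain ⟨C₁, hC₁, h₁⟩ := exists_one_add_rpow_mul_exp_neg_le (-p) hα
  obtain ⟨C₂, hC₂, h₂⟩ := exists_one_add_rpow_mul_exp_neg_le (p + q) hβ
  refine ⟨C₁ * C₂, by positivity, fun u hu => ?_⟩
  calc u ^ p * (1 + u) ^ q * exp (-(α * u⁻¹ + β * u))
      = (1 + u⁻¹) ^ (-p) * exp (-(α * u⁻¹)) * ((1 + u) ^ (p + q) * exp (-(β * u))) := by
        rw [rpow_mul_one_add_rpow p q hu, neg_add, exp_add]
        ring
    _ ≤ C₁ * C₂ := by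
        gcongr
        · exact h₁ _ (by positivity)
        · exact h₂ _ hu.le

/-- The phase `φ(u) = (au - 1)² / (4u)`, which vanishes on `u > 0` only at `u = 1/a`. It is what
remains of the exponent of `hN` after completing the square and rescaling `t = ru`. -/
noncomputable def laplacePhase (a u : ℝ) : ℝ :=
  (a * u - 1) ^ 2 / (4 * u)

/-- The integrand `u ^ p (1 + u) ^ q exp (-r φ(u))` of the Laplace-type integrals over `u > 0` to
which `F` reduces; `r` is the large parameter. -/
noncomputable def laplaceIntegrand (a p q r u : ℝ) : ℝ :=
  u ^ p * (1 + u) ^ q * exp (-(r * laplacePhase a u))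

section Laplace

variable {a : ℝ}

lemma laplacePhase_nonneg (a : ℝ) {u : ℝ} (hu : 0 < u) : 0 ≤ laplacePhase a u := by
  unfold laplacePhase
  positivity

lemma laplaceIntegrand_nonneg (a p q r : ℝ) {u : ℝ} (hu : 0 < u) :
    0 ≤ laplaceIntegrand a p q r u := by
  unfold laplaceIntegrand
  positivity

lemma measurable_laplaceIntegrand (a p q r : ℝ) : Measurable (laplaceIntegrand a p q r) := by
  unfold laplaceIntegrand laplacePhase
  fun_prop

lemma exists_rpow_mul_exp_neg_half_laplacePhase_le (ha : 0 < a) (p q : ℝ) :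
    ∃ C > 0, ∀ u : ℝ, 0 < u → u ^ p * (1 + u) ^ q * exp (-(laplacePhase a u / 2)) ≤ C := by
  obtain ⟨C, hC, hbound⟩ := exists_rpow_mul_one_add_rpow_mul_exp_le p q
    (show (0 : ℝ) < 1 / 8 by norm_num) (show 0 < a ^ 2 / 8 by positivity)
  refine ⟨C * exp (a / 4), by positivity, fun u hu => ?_⟩
  have hexp : exp (-(laplacePhase a u / 2)) =
      exp (-(1 / 8 * u⁻¹ + a ^ 2 / 8 * u)) * exp (a / 4) := by
    rw [← exp_add, laplacePhase]
    congr 1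
    field_simp
    ring
  rw [hexp, ← mul_assoc]
  gcongr
  exact hbound u hu

lemma exp_neg_half_mul_laplacePhase_le (a : ℝ) {r u : ℝ} (hr : 0 ≤ r) (hu : 0 < u) :
    exp (-(r / 2 * laplacePhase a u)) ≤ (1 + u) * (1 + (√r / 3 * (a * u - 1)) ^ 2)⁻¹ := by
  have hφ := laplacePhase_nonneg a hu
  have hsq : (√r / 3 * (a * u - 1)) ^ 2 ≤ u * (r / 2 * laplacePhase a u) := by
    have : u * (r / 2 * laplacePhase a u) = r / 8 * (a * u - 1) ^ 2 := by
      unfold laplacePhase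
      field_simp
      ring
    rw [this, mul_pow, div_pow, sq_sqrt hr]
    gcongr
    norm_num
  have hle : 1 + (√r / 3 * (a * u - 1)) ^ 2 ≤ (1 + u) * exp (r / 2 * laplacePhase a u) :=
    calc 1 + (√r / 3 * (a * u - 1)) ^ 2 ≤ (1 + u) * (r / 2 * laplacePhase a u + 1) := by
          have : 0 ≤ r / 2 * laplacePhase a u := by positivity
          linarith
      _ ≤ (1 + u) * exp (r / 2 * laplacePhase a u) := by
          gcongr
          exact add_one_le_exp _
  rw [exp_neg, ← div_eq_mul_inv, le_div_iff₀ (by positivity), inv_mul_le_iff₀ (exp_pos _)]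
  linarith

lemma exists_laplaceIntegrand_le (ha : 0 < a) (p q : ℝ) :
    ∃ C > 0, ∀ r u : ℝ, 1 ≤ r → 0 < u →
      laplaceIntegrand a p q r u ≤ C * (1 + (√r / 3 * (a * u - 1)) ^ 2)⁻¹ := by
  obtain ⟨C, hC, hbound⟩ := exists_rpow_mul_exp_neg_half_laplacePhase_le ha p (q + 1)
  refine ⟨C, hC, fun r u hr hu => ?_⟩
  -- Half of `φ` tames the weight; the remaining decay, still of order `r`, localises at `1 / a`.
  have hsplit : exp (-(r * laplacePhase a u)) ≤
      exp (-(laplacePhase a u / 2)) * exp (-(r / 2 * laplacePhase a u)) := by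
    rw [← exp_add, exp_le_exp]
    nlinarith [laplacePhase_nonneg a hu]
  calc laplaceIntegrand a p q r u
      ≤ u ^ p * (1 + u) ^ q * (exp (-(laplacePhase a u / 2)) *
          ((1 + u) * (1 + (√r / 3 * (a * u - 1)) ^ 2)⁻¹)) := by
        unfold laplaceIntegrand
        gcongr
        refine hsplit.trans ?_
        gcongr
        exact exp_neg_half_mul_laplacePhase_le a (by linarith) hu
    _ = u ^ p * (1 + u) ^ (q + 1) * exp (-(laplacePhase a u / 2)) *
          (1 + (√r / 3 * (a * u - 1)) ^ 2)⁻¹ := by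
        rw [rpow_add_one (by positivity)]
        ring
    _ ≤ C * (1 + (√r / 3 * (a * u - 1)) ^ 2)⁻¹ := by
        gcongr
        exact hbound u hu

lemma mul_laplacePhase_le (ha : 0 < a) {r u : ℝ} (hr : 0 < r)
    (hu : u ∈ Icc (1 / a) (1 / a + 1 / √r)) : r * laplacePhase a u ≤ a ^ 3 / 4 := by
  have hau : 1 ≤ a * u := (div_le_iff₀' ha).mp hu.1
  have hdev : √r * (a * u - 1) ≤ a :=
    calc √r * (a * u - 1) ≤ √r * (a * (1 / a + 1 / √r) - 1) := by
          gcongr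
          exact hu.2
      _ = a := by field_simp; ring
  have hsq : r * (a * u - 1) ^ 2 ≤ a ^ 2 := by
    rw [← sq_sqrt hr.le, ← mul_pow]
    exact pow_le_pow_left₀ (mul_nonneg (sqrt_nonneg r) (sub_nonneg.mpr hau)) hdev 2
  have hu0 : 0 < u := pos_of_mul_pos_right (one_pos.trans_le hau) ha.le
  rw [laplacePhase, ← mul_div_assoc, div_le_iff₀ (by positivity)]
  calc r * (a * u - 1) ^ 2 ≤ a ^ 2 * 1 := by linarith
    _ ≤ a ^ 2 * (a * u) := by gcongr
    _ = a ^ 3 / 4 * (4 * u) := by ring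

lemma exists_le_laplaceIntegrand (ha : 0 < a) (p q : ℝ) :
    ∃ c > 0, ∀ r u : ℝ, 1 ≤ r → u ∈ Icc (1 / a) (1 / a + 1 / √r) →
      c ≤ laplaceIntegrand a p q r u := by
  have hpos : ∀ u ∈ Icc (1 / a) (1 / a + 1), 0 < u := fun u hu => (one_div_pos.mpr ha).trans_le hu.1
  have hcont : ContinuousOn (fun u : ℝ => u ^ p * (1 + u) ^ q) (Icc (1 / a) (1 / a + 1)) :=
    (continuousOn_id.rpow_const fun u hu => .inl (hpos u hu).ne').mul
      ((continuousOn_const.add continuousOn_id).rpow_const fun u hu =>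
        .inl (add_pos one_pos (hpos u hu)).ne')
  obtain ⟨m, hm, hbound⟩ := isCompact_Icc.exists_forall_le' hcont (a := 0) fun u hu => by
    have := hpos u hu
    positivity
  refine ⟨m * exp (-(a ^ 3 / 4)), by positivity, fun r u hr hu => ?_⟩
  have hwindow : u ∈ Icc (1 / a) (1 / a + 1) := by
    refine ⟨hu.1, hu.2.trans ?_⟩
    gcongr
    exact div_le_one_of_le₀ (one_le_sqrt.mpr hr) (sqrt_nonneg r)
  have := hpos u hwindow
  unfold laplaceIntegrand
  gcongr
  · exact hbound u hwindow
  · exact mul_laplacePhase_le ha (one_pos.trans_le hr) hu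

lemma integrable_laplaceMajorant (ha : 0 < a) {r : ℝ} (hr : 0 < r) (C : ℝ) :
    Integrable fun u : ℝ => C * (1 + (√r / 3 * (a * u - 1)) ^ 2)⁻¹ := by
  have hb : √r / 3 * a ≠ 0 := by positivity
  simpa only [mul_sub, mul_one, mul_assoc] using
    (integrable_inv_one_add_mul_sub_sq hb (√r / 3)).const_mul C

lemma integral_laplaceMajorant (ha : 0 < a) {r : ℝ} (hr : 0 < r) (C : ℝ) :
    ∫ u : ℝ, C * (1 + (√r / 3 * (a * u - 1)) ^ 2)⁻¹ = C * (3 * π / a) / √r := by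
  have haffine := integral_inv_one_add_mul_sub_sq (√r / 3 * a) (√r / 3)
  simp only [mul_assoc, ← mul_sub_one] at haffine
  rw [integral_const_mul, haffine, abs_of_pos (by positivity)]
  field_simp

lemma integrableOn_laplaceIntegrand (ha : 0 < a) (p q : ℝ) {r : ℝ} (hr : 1 ≤ r) :
    IntegrableOn (laplaceIntegrand a p q r) (Ioi 0) := by
  obtain ⟨C, -, hbound⟩ := exists_laplaceIntegrand_le ha p q
  refine (integrable_laplaceMajorant ha (one_pos.trans_le hr) C).integrableOn.mono'
    (measurable_laplaceIntegrand a p q r).aestronglyMeasurable ?_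
  filter_upwards [ae_restrict_mem measurableSet_Ioi] with u hu
  rw [norm_of_nonneg (laplaceIntegrand_nonneg a p q r hu)]
  exact hbound r u hr hu

lemma exists_setIntegral_laplaceIntegrand_le (ha : 0 < a) (p q : ℝ) :
    ∃ C > 0, ∀ r : ℝ, 1 ≤ r → ∫ u in Ioi 0, laplaceIntegrand a p q r u ≤ C / √r := by
  obtain ⟨C, hC, hbound⟩ := exists_laplaceIntegrand_le ha p q
  refine ⟨C * (3 * π / a), by positivity, fun r hr => ?_⟩
  have hmajorant := integrable_laplaceMajorant ha (one_pos.trans_le hr) C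
  calc ∫ u in Ioi 0, laplaceIntegrand a p q r u
      ≤ ∫ u in Ioi 0, C * (1 + (√r / 3 * (a * u - 1)) ^ 2)⁻¹ :=
        setIntegral_mono_on (integrableOn_laplaceIntegrand ha p q hr) hmajorant.integrableOn
          measurableSet_Ioi fun u hu => hbound r u hr hu
    _ ≤ ∫ u, C * (1 + (√r / 3 * (a * u - 1)) ^ 2)⁻¹ :=
        setIntegral_le_integral hmajorant (.of_forall fun u => by positivity)
    _ = C * (3 * π / a) / √r := integral_laplaceMajorant ha (one_pos.trans_le hr) C

lemma exists_le_setIntegral_laplaceIntegrand (ha : 0 < a) (p q : ℝ) :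
    ∃ c > 0, ∀ r : ℝ, 1 ≤ r → c / √r ≤ ∫ u in Ioi 0, laplaceIntegrand a p q r u := by
  obtain ⟨c, hc, hbound⟩ := exists_le_laplaceIntegrand ha p q
  refine ⟨c, hc, fun r hr => ?_⟩
  have hint := integrableOn_laplaceIntegrand ha p q hr
  have hsub : Icc (1 / a) (1 / a + 1 / √r) ⊆ Ioi 0 := fun u hu =>
    (one_div_pos.mpr ha).trans_le hu.1
  calc c / √r = c * volume.real (Icc (1 / a) (1 / a + 1 / √r)) := by
        rw [volume_real_Icc_of_le (by simp), add_sub_cancel_left, mul_one_div]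
    _ ≤ ∫ u in Icc (1 / a) (1 / a + 1 / √r), laplaceIntegrand a p q r u :=
        setIntegral_ge_of_const_le_real measurableSet_Icc (by simp) (fun u => hbound r u hr)
          (hint.mono_set hsub)
    _ ≤ ∫ u in Ioi 0, laplaceIntegrand a p q r u :=
        setIntegral_mono_set hint ((ae_restrict_mem measurableSet_Ioi).mono fun u =>
          laplaceIntegrand_nonneg a p q r) hsub.eventuallyLE

end Laplace

lemma F_eq_mul_setIntegral (N : ℕ) (s : ℝ) {r : ℝ} (hr : 0 < r) :
    F N s r = r * ∫ u in Ioi 0, hN N (r * u) r * (r * u) ^ (s - 1) := by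
  have := integral_comp_mul_left_Ioi (fun t => hN N t r * t ^ (s - 1)) 0 hr
  rw [mul_zero, smul_eq_mul] at this
  rw [this, F, mul_inv_cancel_left₀ hr.ne']

lemma hN_mul_rpow_eq (N : ℕ) (s : ℝ) {r u : ℝ} (hr : 0 < r) (hu : 0 < u) :
    hN N (r * u) r * (r * u) ^ (s - 1) =
      (4 * π) ^ (-(N : ℝ) / 2) * exp (-((N : ℝ) - 1) * r) * r ^ (s - 1 - (N : ℝ) / 2) *
        ((1 + r) * (1 + r + r * u) ^ (((N : ℝ) - 3) / 2)) *
        (u ^ (s - 1 - (N : ℝ) / 2) * exp (-(r * laplacePhase ((N : ℝ) - 1) u))) := by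
  have hexp : exp (-(((N : ℝ) - 1) ^ 2 * (r * u)) / 4 - ((N : ℝ) - 1) * r / 2
      - r ^ 2 / (4 * (r * u))) =
        exp (-((N : ℝ) - 1) * r) * exp (-(r * laplacePhase ((N : ℝ) - 1) u)) := by
    rw [← exp_add, laplacePhase]
    congr 1
    field_simp
    ring
  have hsplit {y : ℝ} (hy : 0 < y) :
      y ^ (s - 1 - (N : ℝ) / 2) = y ^ (-(N : ℝ) / 2) * y ^ (s - 1) := by
    rw [← rpow_add hy]
    ring_nf
  rw [hN, hexp, hsplit hr, hsplit hu, mul_rpow (by positivity) (by positivity : 0 ≤ r * u),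
    mul_rpow hr.le hu.le, mul_rpow hr.le hu.le]
  ring

lemma one_add_mul_rpow_mem_Icc (q : ℝ) {r u : ℝ} (hr : 1 ≤ r) (hu : 0 < u) :
    (1 + r) * (1 + r + r * u) ^ q ∈
      Icc (2 ^ (-|q|) * (r ^ (q + 1) * (1 + u) ^ q))
        (2 * 2 ^ |q| * (r ^ (q + 1) * (1 + u) ^ q)) := by
  have hr0 : 0 < r := one_pos.trans_le hr
  obtain ⟨hlow, hup⟩ := rpow_mem_Icc_of_mem_Icc (x := r * (1 + u)) (y := 1 + r + r * u) (K := 2) q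
    (by positivity) ⟨by linarith, by nlinarith⟩
  rw [mul_rpow hr0.le (by positivity)] at hlow hup
  rw [rpow_add_one hr0.ne']
  constructor
  · calc 2 ^ (-|q|) * (r ^ q * r * (1 + u) ^ q)
        = r * (2 ^ (-|q|) * (r ^ q * (1 + u) ^ q)) := by ring
      _ ≤ (1 + r) * (1 + r + r * u) ^ q := by
          gcongr
          linarith
  · calc (1 + r) * (1 + r + r * u) ^ q ≤ (2 * r) * (2 ^ |q| * (r ^ q * (1 + u) ^ q)) := by
          gcongr
          linarith
      _ = 2 * 2 ^ |q| * (r ^ q * r * (1 + u) ^ q) := by ring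

lemma exists_hN_mul_rpow_mem_Icc (N : ℕ) (s : ℝ) :
    ∃ c > 0, ∃ C > 0, ∀ r u : ℝ, 1 ≤ r → 0 < u →
      hN N (r * u) r * (r * u) ^ (s - 1) ∈
        Icc (c * exp (-((N : ℝ) - 1) * r) * r ^ (s - 3 / 2) *
              laplaceIntegrand (N - 1) (s - 1 - N / 2) ((N - 3) / 2) r u)
          (C * exp (-((N : ℝ) - 1) * r) * r ^ (s - 3 / 2) *
              laplaceIntegrand (N - 1) (s - 1 - N / 2) ((N - 3) / 2) r u) := by
  set q : ℝ := ((N : ℝ) - 3) / 2 with hq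
  refine ⟨(4 * π) ^ (-(N : ℝ) / 2) * 2 ^ (-|q|), by positivity,
    (4 * π) ^ (-(N : ℝ) / 2) * (2 * 2 ^ |q|), by positivity, fun r u hr hu => ?_⟩
  have hr0 : 0 < r := one_pos.trans_le hr
  have hpow : r ^ (s - 3 / 2) = r ^ (s - 1 - (N : ℝ) / 2) * r ^ (q + 1) := by
    rw [← rpow_add hr0, hq]
    ring_nf
  obtain ⟨hlow, hup⟩ := one_add_mul_rpow_mem_Icc q hr hu
  rw [hN_mul_rpow_eq N s hr0 hu, hpow, laplaceIntegrand]
  constructor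
  · refine le_of_eq_of_le ?_ (mul_le_mul_of_nonneg_right
      (mul_le_mul_of_nonneg_left hlow (by positivity)) (by positivity))
    ring
  · refine le_of_le_of_eq (mul_le_mul_of_nonneg_right
      (mul_le_mul_of_nonneg_left hup (by positivity)) (by positivity)) ?_
    ring

lemma exists_F_mem_Icc (N : ℕ) (hN2 : 2 ≤ N) (s : ℝ) :
    ∃ c > 0, ∃ C > 0, ∀ r : ℝ, 1 ≤ r →
      F N s r ∈
        Icc (c * exp (-((N : ℝ) - 1) * r) * r ^ (s - 1 / 2) *
              ∫ u in Ioi 0, laplaceIntegrand (N - 1) (s - 1 - N / 2) ((N - 3) / 2) r u)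
          (C * exp (-((N : ℝ) - 1) * r) * r ^ (s - 1 / 2) *
              ∫ u in Ioi 0, laplaceIntegrand (N - 1) (s - 1 - N / 2) ((N - 3) / 2) r u) := by
  have ha : (0 : ℝ) < N - 1 := sub_pos.mpr (by exact_mod_cast hN2)
  obtain ⟨c, hc, C, hC, hbound⟩ := exists_hN_mul_rpow_mem_Icc N s
  refine ⟨c, hc, C, hC, fun r hr => ?_⟩
  have hr0 : 0 < r := one_pos.trans_le hr
  have hmeas : Measurable fun u => hN N (r * u) r * (r * u) ^ (s - 1) := by
    unfold hN
    fun_prop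
  obtain ⟨hlow, hup⟩ := integral_mem_Icc_of_comparable hmeas.aestronglyMeasurable
    (integrableOn_laplaceIntegrand ha _ _ hr)
    ((ae_restrict_mem measurableSet_Ioi).mono fun u hu => hbound r u hr hu)
  have hpow : r ^ (s - 1 / 2) = r * r ^ (s - 3 / 2) := by
    rw [mul_comm, ← rpow_add_one hr0.ne']
    ring_nf
  rw [F_eq_mul_setIntegral N s hr0, hpow]
  constructor
  · refine le_of_eq_of_le ?_ (mul_le_mul_of_nonneg_left hlow hr0.le)
    ring
  · refine le_of_le_of_eq (mul_le_mul_of_nonneg_left hup hr0.le) ?_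
    ring

theorem F_estimate_ge_one_general (N : ℕ) (hN2 : 2 ≤ N) (s : ℝ) :
    ∃ C₄ > (0 : ℝ), ∃ C₄' > (0 : ℝ),
      ∀ r : ℝ, 1 ≤ r →
        C₄ * Real.exp (-((N : ℝ) - 1) * r) * r ^ (s - 1) ≤ F N s r ∧
          F N s r ≤ C₄' * Real.exp (-((N : ℝ) - 1) * r) * r ^ (s - 1) := by
  have ha : (0 : ℝ) < N - 1 := sub_pos.mpr (by exact_mod_cast hN2)
  obtain ⟨c, hc, C, hC, hF⟩ := exists_F_mem_Icc N hN2 s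
  obtain ⟨d, hd, hlow⟩ := exists_le_setIntegral_laplaceIntegrand ha (s - 1 - N / 2) ((N - 3) / 2)
  obtain ⟨D, hD, hup⟩ := exists_setIntegral_laplaceIntegrand_le ha (s - 1 - N / 2) ((N - 3) / 2)
  refine ⟨c * d, by positivity, C * D, by positivity, fun r hr => ?_⟩
  have hr0 : 0 < r := one_pos.trans_le hr
  have hpow : r ^ (s - 1) = r ^ (s - 1 / 2) / √r := by
    rw [sqrt_eq_rpow, ← rpow_sub hr0]
    ring_nf
  rw [hpow]
  constructor
  · calc c * d * exp (-((N : ℝ) - 1) * r) * (r ^ (s - 1 / 2) / √r)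
        = c * exp (-((N : ℝ) - 1) * r) * r ^ (s - 1 / 2) * (d / √r) := by ring
      _ ≤ _ := by gcongr; exact hlow r hr
      _ ≤ F N s r := (hF r hr).1
  · calc F N s r ≤ _ := (hF r hr).2
      _ ≤ C * exp (-((N : ℝ) - 1) * r) * r ^ (s - 1 / 2) * (D / √r) := by gcongr; exact hup r hr
      _ = C * D * exp (-((N : ℝ) - 1) * r) * (r ^ (s - 1 / 2) / √r) := by ring

theorem F_estimate_ge_one (N : ℕ) (hN3 : 3 ≤ N) (s : ℝ) (hs0 : 0 < s) (hs1 : s < 1) :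
    ∃ C₄ > (0 : ℝ), ∃ C₄' > (0 : ℝ),
      ∀ r : ℝ, 1 ≤ r →
        C₄ * Real.exp (-((N : ℝ) - 1) * r) * r ^ (s - 1) ≤ F N s r ∧
          F N s r ≤ C₄' * Real.exp (-((N : ℝ) - 1) * r) * r ^ (s - 1) :=
  F_estimate_ge_one_general N (by omega) s
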